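/- Define polynomials P_k(τ₀) by P_1 = 1, P_2(τ₀) = τ₀/2, and k P_k(τ₀) = τ₀ P_{k−1}(τ₀) + P_{k−2}(τ₀) for k ≥ 3. Then for all real τ, τ₀: √(π/2) exp(τ²/2)(erfc(τ₀/√2) − erfc(τ/√2)) = Σ_{k=1}^∞ P_k(τ₀)(τ − τ₀)^k, with the series converging for all τ. -/

import Mathlib

open Real MeasureTheory

/-- The complementary error function. -/
noncomputable def erfc (x : ℝ) : ℝ := (2 / Real.sqrt π) * ∫ t in Set.Ioi x, Real.exp (-t ^ 2)

section PowerSeries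

variable {c : ℕ → ℝ} {s : ℝ}

/-- Coefficients satisfying the recurrence decay faster than any geometric sequence. -/
theorem exists_abs_mul_pow_le
    (hrec : ∀ n : ℕ, ((n : ℝ) + 3) * c (n + 2) = s * c (n + 1) + c n) {R : ℝ} (hR : 0 ≤ R) :
    ∃ C, ∀ n, |c n| * R ^ n ≤ C := by
  obtain ⟨N, hN⟩ := exists_nat_ge (|s| * R + R ^ 2)
  have hpos : ∀ i, 0 ≤ |c i| * R ^ i := fun i => by positivity
  refine ⟨∑ i ∈ Finset.range (N + 2), |c i| * R ^ i, fun n => ?_⟩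
  induction n using Nat.strong_induction_on with
  | _ n ih =>
    by_cases hn : n < N + 2
    · exact Finset.single_le_sum (f := fun i => |c i| * R ^ i) (fun i _ => hpos i)
        (Finset.mem_range.mpr hn)
    · obtain ⟨m, rfl⟩ : ∃ m, n = m + 2 := ⟨n - 2, by omega⟩
      have hm : (N : ℝ) ≤ m := by exact_mod_cast (by omega : N ≤ m)
      have h1 := ih (m + 1) (by omega)
      have h0 := ih m (by omega)
      set C := ∑ i ∈ Finset.range (N + 2), |c i| * R ^ i
      have hC : 0 ≤ C := (hpos m).trans h0
      have habs : ((m : ℝ) + 3) * |c (m + 2)| ≤ |s| * |c (m + 1)| + |c m| := by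
        rw [← abs_of_nonneg (by positivity : (0 : ℝ) ≤ (m : ℝ) + 3), ← abs_mul, hrec m, ← abs_mul]
        exact abs_add_le _ _
      have key : ((m : ℝ) + 3) * (|c (m + 2)| * R ^ (m + 2)) ≤ ((m : ℝ) + 3) * C := by
        calc ((m : ℝ) + 3) * (|c (m + 2)| * R ^ (m + 2))
            = ((m : ℝ) + 3) * |c (m + 2)| * R ^ (m + 2) := by ring
          _ ≤ (|s| * |c (m + 1)| + |c m|) * R ^ (m + 2) := by gcongr
          _ = |s| * R * (|c (m + 1)| * R ^ (m + 1)) + R ^ 2 * (|c m| * R ^ m) := by ring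
          _ ≤ |s| * R * C + R ^ 2 * C := by gcongr
          _ = (|s| * R + R ^ 2) * C := by ring
          _ ≤ ((m : ℝ) + 3) * C := mul_le_mul_of_nonneg_right (by linarith) hC
      exact le_of_mul_le_mul_left key (by positivity)

theorem summable_succ_mul_abs_mul_pow
    (hrec : ∀ n : ℕ, ((n : ℝ) + 3) * c (n + 2) = s * c (n + 1) + c n) {R : ℝ} (hR : 0 ≤ R) :
    Summable fun n : ℕ => ((n : ℝ) + 1) * |c n| * R ^ n := by
  obtain ⟨C, hC⟩ := exists_abs_mul_pow_le hrec (by positivity : 0 ≤ 2 * R)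
  have hg : Summable fun n : ℕ => C * (((n : ℝ) + 1) * (1 / 2) ^ n) := by
    refine Summable.mul_left _ ?_
    have h1 := summable_pow_mul_geometric_of_norm_lt_one 1 (r := (1 / 2 : ℝ)) (by norm_num)
    have h0 := summable_pow_mul_geometric_of_norm_lt_one 0 (r := (1 / 2 : ℝ)) (by norm_num)
    exact (h1.add h0).congr fun n => by ring
  refine Summable.of_nonneg_of_le (fun n => by positivity) (fun n => ?_) hg
  have hsplit : ((n : ℝ) + 1) * |c n| * R ^ n
      = (|c n| * (2 * R) ^ n) * (((n : ℝ) + 1) * (1 / 2) ^ n) := by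
    rw [mul_pow, one_div, inv_pow]
    field_simp
  rw [hsplit]
  gcongr
  exact hC n

theorem summable_mul_pow_succ
    (hrec : ∀ n : ℕ, ((n : ℝ) + 3) * c (n + 2) = s * c (n + 1) + c n) (x : ℝ) :
    Summable fun n : ℕ => c n * x ^ (n + 1) := by
  refine Summable.of_norm_bounded
    ((summable_succ_mul_abs_mul_pow hrec (abs_nonneg x)).mul_left |x|) fun n => ?_
  rw [norm_mul, norm_pow, Real.norm_eq_abs, Real.norm_eq_abs]
  have h : 0 ≤ (n : ℝ) * (|c n| * |x| ^ (n + 1)) := by positivity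
  calc |c n| * |x| ^ (n + 1) ≤ |c n| * |x| ^ (n + 1) + n * (|c n| * |x| ^ (n + 1)) := by linarith
    _ = |x| * (((n : ℝ) + 1) * |c n| * |x| ^ n) := by ring

/-- The power series solves the first-order equation `f' = (x + s) f + 1`. -/
theorem hasDerivAt_tsum_mul_pow_succ (h0 : c 0 = 1) (h1 : c 1 = s / 2)
    (hrec : ∀ n : ℕ, ((n : ℝ) + 3) * c (n + 2) = s * c (n + 1) + c n) (x : ℝ) :
    HasDerivAt (fun y => ∑' n : ℕ, c n * y ^ (n + 1))
      ((x + s) * (∑' n : ℕ, c n * x ^ (n + 1)) + 1) x := by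
  have hx : x ∈ Metric.ball (0 : ℝ) (|x| + 1) := by simp
  have hder := hasDerivAt_tsum_of_isPreconnected
    (g := fun (n : ℕ) (y : ℝ) => c n * y ^ (n + 1))
    (g' := fun (n : ℕ) (y : ℝ) => ((n : ℝ) + 1) * c n * y ^ n)
    (summable_succ_mul_abs_mul_pow hrec (by positivity : 0 ≤ |x| + 1))
    Metric.isOpen_ball (convex_ball (0 : ℝ) (|x| + 1)).isPreconnected
    (fun n y _ => by
      refine ((hasDerivAt_pow (n + 1) y).const_mul (c n)).congr_deriv ?_
      push_cast
      ring)
    (fun n y hy => by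
      have hy' : |y| ≤ |x| + 1 := by simpa using (mem_ball_zero_iff.mp hy).le
      rw [norm_mul, norm_mul, norm_pow, Real.norm_eq_abs, Real.norm_eq_abs, Real.norm_eq_abs,
        abs_of_nonneg (by positivity : (0 : ℝ) ≤ (n : ℝ) + 1)]
      gcongr)
    hx (summable_mul_pow_succ hrec x) hx
  refine hder.congr_deriv ?_
  have hf := (summable_mul_pow_succ hrec x).hasSum
  set F := ∑' n : ℕ, c n * x ^ (n + 1)
  have hf1 : HasSum (fun n : ℕ => c (n + 1) * x ^ (n + 2)) (F - x) := by
    have := (hasSum_nat_add_iff' 1).mpr hf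
    simpa [h0] using this
  have hvalue : (x + s) * F + 1 - ∑ i ∈ Finset.range 2, ((i : ℝ) + 1) * c i * x ^ i
      = s * (F - x) + x * F := by
    simp only [Finset.sum_range_succ, Finset.sum_range_zero, h0, h1]
    push_cast
    ring
  refine HasSum.tsum_eq ((hasSum_nat_add_iff' 2).mp ?_)
  rw [hvalue]
  convert! (hf1.mul_left s).add (hf.mul_left x) using 1
  funext n
  push_cast
  linear_combination x ^ (n + 2) * hrec n

/-- Solving the first-order equation with the integrating factor `exp (-y² / 2)`. -/
theorem tsum_mul_pow_succ_mul_exp (h0 : c 0 = 1) (h1 : c 1 = s / 2)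
    (hrec : ∀ n : ℕ, ((n : ℝ) + 3) * c (n + 2) = s * c (n + 1) + c n) (t : ℝ) :
    (∑' n : ℕ, c n * (t - s) ^ (n + 1)) * Real.exp (-t ^ 2 / 2)
      = ∫ y in s..t, Real.exp (-y ^ 2 / 2) := by
  have hderiv : ∀ y : ℝ, HasDerivAt
      (fun y => (∑' n : ℕ, c n * (y - s) ^ (n + 1)) * Real.exp (-y ^ 2 / 2))
      (Real.exp (-y ^ 2 / 2)) y := fun y => by
    have hexp : HasDerivAt (fun y : ℝ => Real.exp (-y ^ 2 / 2))
        (Real.exp (-y ^ 2 / 2) * -y) y := by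
      refine (((hasDerivAt_pow 2 y).neg).div_const 2).exp.congr_deriv ?_
      simp
      ring
    refine (((hasDerivAt_tsum_mul_pow_succ h0 h1 hrec (y - s)).comp_sub_const y s).mul
      hexp).congr_deriv ?_
    ring
  rw [intervalIntegral.integral_eq_sub_of_hasDerivAt (fun y _ => hderiv y)
    (Continuous.intervalIntegrable (by fun_prop) _ _)]
  simp

end PowerSeries

theorem erfc_sub_erfc (a b : ℝ) :
    erfc a - erfc b = 2 / Real.sqrt π * ∫ t in a..b, Real.exp (-t ^ 2) := by
  have hint : Integrable fun t : ℝ => Real.exp (-t ^ 2) := by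
    simpa using integrable_exp_neg_mul_sq one_pos
  rw [erfc, erfc, ← mul_sub,
    intervalIntegral.integral_Ioi_sub_Ioi' hint.integrableOn hint.integrableOn]

theorem erfc_div_sqrt_two_sub (a b : ℝ) :
    Real.sqrt (π / 2) * (erfc (a / Real.sqrt 2) - erfc (b / Real.sqrt 2))
      = ∫ y in a..b, Real.exp (-y ^ 2 / 2) := by
  have hcomp := intervalIntegral.integral_comp_div (a := a) (b := b)
    (fun t : ℝ => Real.exp (-t ^ 2)) (by positivity : Real.sqrt 2 ≠ 0)
  simp only [div_pow, Real.sq_sqrt (by norm_num : (0 : ℝ) ≤ 2), ← neg_div, smul_eq_mul] at hcomp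
  rw [hcomp, erfc_sub_erfc, ← mul_assoc, Real.sqrt_div pi_pos.le]
  congr 1
  have hpi : Real.sqrt π ≠ 0 := by positivity
  field_simp
  simp

/-- With `P_1 = 1`, `P_2(τ₀) = τ₀/2` and `k P_k = τ₀ P_{k-1} + P_{k-2}` for `k ≥ 3`,
the function `E(τ) = √(π/2) e^{τ²/2}(erfc(τ₀/√2) - erfc(τ/√2))` equals the everywhere
convergent series `Σ_{k≥1} P_k(τ₀)(τ - τ₀)^k`. -/
theorem E_power_series (P : ℕ → ℝ → ℝ)
    (hP1 : ∀ τ₀, P 1 τ₀ = 1) (hP2 : ∀ τ₀, P 2 τ₀ = τ₀ / 2)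
    (hPrec : ∀ τ₀, ∀ k : ℕ, 3 ≤ k → (k : ℝ) * P k τ₀ = τ₀ * P (k - 1) τ₀ + P (k - 2) τ₀) :
    ∀ τ₀ τ : ℝ,
      HasSum (fun k : ℕ => P (k + 1) τ₀ * (τ - τ₀) ^ (k + 1))
        (Real.sqrt (π / 2) * Real.exp (τ ^ 2 / 2) *
          (erfc (τ₀ / Real.sqrt 2) - erfc (τ / Real.sqrt 2))) := by
  intro s t
  have hrec : ∀ n : ℕ, ((n : ℝ) + 3) * P (n + 2 + 1) s = s * P (n + 1 + 1) s + P (n + 1) s :=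
    fun n => by simpa using hPrec s (n + 3) (by omega)
  convert (summable_mul_pow_succ (c := fun n => P (n + 1) s) hrec (t - s)).hasSum using 1
  have hkey := tsum_mul_pow_succ_mul_exp (c := fun n => P (n + 1) s) (hP1 s) (hP2 s) hrec t
  rw [mul_right_comm, erfc_div_sqrt_two_sub, ← hkey, mul_assoc, ← Real.exp_add]
  simp [neg_div]
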